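/- (Fractional Liouville reduction, equation form.) Let n ≥ 1 be an integer, s ∈ (0,1), let Ω ⊆ ℝⁿ be an open set, and let γ : ℝⁿ → ℝ be a smooth function with γ(x) ≥ γ₀ for some constant γ₀ > 0 and such that γ − 1 is compactly supported. Let u : ℝⁿ → ℝ be a Schwartz function and set w := γ^{1/2} u. Then the following are equivalent: (i) B_γ(u, φ) = 0 for all smooth compactly supported φ with support in Ω; (ii) B_1(w, φ) + ∫_{ℝⁿ} q_γ(x) w(x) φ(x) dx = 0 for all smooth compactly supported φ with support in Ω. That is, u is a weak solution of C^s_γ u = 0 in Ω if and only if w = γ^{1/2}u is a weak solution of ((−Δ)^s + q_γ) w = 0 in Ω. -/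

import Mathlib

open MeasureTheory
noncomputable section

/-- Euclidean space ℝⁿ. -/
abbrev RR (n : ℕ) := EuclideanSpace ℝ (Fin n)

/-- The constant c_{n,s} = 4^s Γ(n/2+s) / (π^{n/2} |Γ(-s)|). -/
def cns (n : ℕ) (s : ℝ) : ℝ :=
  (4 : ℝ) ^ s * Real.Gamma ((n : ℝ) / 2 + s) / (Real.pi ^ ((n : ℝ) / 2) * |Real.Gamma (-s)|)

/-- The fractional conductivity bilinear form
B_γ(u,v) = (c_{n,s}/2) ∬ γ^{1/2}(x) γ^{1/2}(y) (u(x)-u(y))(v(x)-v(y)) / |x-y|^{n+2s} dx dy. -/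
def Bform (n : ℕ) (s : ℝ) (γ u v : RR n → ℝ) : ℝ :=
  (cns n s / 2) * ∫ p : RR n × RR n,
    Real.sqrt (γ p.1) * Real.sqrt (γ p.2) * (u p.1 - u p.2) * (v p.1 - v p.2) /
      ‖p.1 - p.2‖ ^ ((n : ℝ) + 2 * s)

/-- The Liouville potential q_γ = -γ^{-1/2} (-Δ)^s γ^{1/2}, with the fractional Laplacian
given by the symmetrized singular integral. -/
def liouvillePot (n : ℕ) (s : ℝ) (γ : RR n → ℝ) (x : RR n) : ℝ :=
  -(Real.sqrt (γ x))⁻¹ * ((cns n s / 2) * ∫ y : RR n,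
    (2 * Real.sqrt (γ x) - Real.sqrt (γ (x + y)) - Real.sqrt (γ (x - y))) /
      ‖y‖ ^ ((n : ℝ) + 2 * s))


theorem flr_integrable_h (n : ℕ) (hn : 1 ≤ n) (s : ℝ) (hs : s ∈ Set.Ioo (0 : ℝ) 1) :
    Integrable (fun x : RR n => min 1 (‖x‖ ^ 2) / ‖x‖ ^ ((n : ℝ) + 2 * s)) := by
  have : Nonempty (Fin n) := ⟨⟨0, hn⟩⟩
  obtain ⟨hs0, hs1⟩ := hs
  rw [integrable_fun_norm_addHaar (E := RR n) volume
    (f := fun r : ℝ => min 1 (r ^ 2) / r ^ ((n : ℝ) + 2 * s))]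
  rw [← Set.Ioc_union_Ioi_eq_Ioi (zero_le_one : (0 : ℝ) ≤ 1), integrableOn_union]
  have key : ∀ y : ℝ, 0 < y → y ^ (n - 1) / y ^ ((n : ℝ) + 2 * s) = y ^ (-1 - 2 * s) := by
    intro y hy
    rw [← Real.rpow_natCast, ← Real.rpow_sub hy, Nat.cast_sub hn]
    congr 1
    push_cast
    ring
  constructor
  · have h1 : IntegrableOn (fun y : ℝ => y ^ (1 - 2 * s)) (Set.Ioc 0 1) := by
      rw [← intervalIntegrable_iff_integrableOn_Ioc_of_le zero_le_one]
      exact intervalIntegral.intervalIntegrable_rpow' (by linarith)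
    refine h1.congr_fun ?_ measurableSet_Ioc
    intro y hy
    have hy0 : 0 < y := hy.1
    have h2 : y ^ 2 ≤ 1 := pow_le_one₀ hy0.le hy.2
    simp only [smul_eq_mul, finrank_euclideanSpace, Fintype.card_fin]
    rw [min_eq_right h2, mul_div_assoc', mul_comm (y ^ (n - 1)), mul_div_assoc, key y hy0,
      ← Real.rpow_natCast, ← Real.rpow_add hy0]
    congr 1
    push_cast
    ring
  · have h1 : IntegrableOn (fun y : ℝ => y ^ (-1 - 2 * s)) (Set.Ioi 1) :=
      integrableOn_Ioi_rpow_of_lt (by linarith) one_pos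
    refine h1.congr_fun ?_ measurableSet_Ioi
    intro y hy
    have hy1 : 1 < y := hy
    have h2 : 1 ≤ y ^ 2 := one_le_pow₀ hy1.le
    simp only [smul_eq_mul, finrank_euclideanSpace, Fintype.card_fin]
    rw [min_eq_left h2, mul_one_div, key y (by linarith)]

/-- Bounded and Lipschitz. -/
def FlrBL {n : ℕ} (f : RR n → ℝ) : Prop :=
  ∃ C : ℝ, 0 ≤ C ∧ ∀ x y, |f x - f y| ≤ C * min 1 ‖x - y‖

theorem flr_integrable (n : ℕ) (hn : 1 ≤ n) (s : ℝ) (hs : s ∈ Set.Ioo (0 : ℝ) 1)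
    (f ψ : RR n → ℝ) (hf : FlrBL f) (hψ : FlrBL ψ) (hfc : Continuous f) (hψc : Continuous ψ)
    (hψs : HasCompactSupport ψ) :
    Integrable (fun p : RR n × RR n =>
      (f p.1 - f p.2) * (ψ p.1 - ψ p.2) / ‖p.1 - p.2‖ ^ ((n : ℝ) + 2 * s)) := by
  obtain ⟨C, hC, hC'⟩ := hf
  obtain ⟨D, hD, hD'⟩ := hψ
  set h : RR n → ℝ := fun x => min 1 (‖x‖ ^ 2) / ‖x‖ ^ ((n : ℝ) + 2 * s) with hh
  have hint : Integrable h := flr_integrable_h n hn s hs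
  set S : RR n → ℝ := Set.indicator (tsupport ψ) (fun _ => (1 : ℝ)) with hS
  have hSint : Integrable S := by
    rw [hS, integrable_indicator_iff (isClosed_tsupport ψ).measurableSet]
    exact integrableOn_const (IsCompact.measure_lt_top hψs).ne
  have I1 : Integrable (fun p : RR n × RR n => S p.2 * h (p.1 - p.2)) :=
    Integrable.convolution_integrand (ContinuousLinearMap.mul ℝ ℝ) hSint hint
  have I2 : Integrable (fun p : RR n × RR n => S p.1 * h (p.1 - p.2)) := by
    refine I1.swap.congr (Filter.Eventually.of_forall fun p => ?_)
    simp only [Function.comp, Prod.fst_swap, Prod.snd_swap, hh, norm_sub_rev p.2 p.1]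
  refine ((I1.add I2).const_mul (C * D)).mono' ?_ (Filter.Eventually.of_forall fun p => ?_)
  · apply Measurable.aestronglyMeasurable
    fun_prop
  · have hK : 0 ≤ ‖p.1 - p.2‖ ^ ((n : ℝ) + 2 * s) := by positivity
    have hmin : min 1 ‖p.1 - p.2‖ * min 1 ‖p.1 - p.2‖ ≤ min 1 (‖p.1 - p.2‖ ^ 2) := by
      have h0 : 0 ≤ min 1 ‖p.1 - p.2‖ := by positivity
      have h1 := min_le_left 1 ‖p.1 - p.2‖
      have h2 := min_le_right 1 ‖p.1 - p.2‖
      exact le_min (by nlinarith) (by nlinarith)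
    have hS0 : ∀ x, 0 ≤ S x := fun x => Set.indicator_nonneg (fun _ _ => zero_le_one) x
    have hS1 : |ψ p.1 - ψ p.2| ≤ D * min 1 ‖p.1 - p.2‖ * (S p.2 + S p.1) := by
      have hd : 0 ≤ D * min 1 ‖p.1 - p.2‖ := by positivity
      by_cases h1 : p.1 ∈ tsupport ψ
      · have : S p.1 = 1 := Set.indicator_of_mem h1 _
        have := hS0 p.2
        have := hD' p.1 p.2
        nlinarith
      · by_cases h2 : p.2 ∈ tsupport ψ
        · have : S p.2 = 1 := Set.indicator_of_mem h2 _
          have := hS0 p.1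
          have := hD' p.1 p.2
          nlinarith
        · rw [image_eq_zero_of_notMem_tsupport h1, image_eq_zero_of_notMem_tsupport h2]
          simp only [sub_zero, abs_zero]
          exact mul_nonneg hd (add_nonneg (hS0 _) (hS0 _))
    have hSS : 0 ≤ S p.2 + S p.1 := add_nonneg (hS0 _) (hS0 _)
    rw [Real.norm_eq_abs, abs_div, abs_mul, abs_of_nonneg hK]
    calc |f p.1 - f p.2| * |ψ p.1 - ψ p.2| / ‖p.1 - p.2‖ ^ ((n : ℝ) + 2 * s)
        ≤ (C * min 1 ‖p.1 - p.2‖) * (D * min 1 ‖p.1 - p.2‖ * (S p.2 + S p.1))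
          / ‖p.1 - p.2‖ ^ ((n : ℝ) + 2 * s) := by
          apply div_le_div_of_nonneg_right _ hK
          exact mul_le_mul (hC' _ _) hS1 (abs_nonneg _) (by positivity)
      _ = C * D * (S p.2 + S p.1) * (min 1 ‖p.1 - p.2‖ * min 1 ‖p.1 - p.2‖)
          / ‖p.1 - p.2‖ ^ ((n : ℝ) + 2 * s) := by ring
      _ ≤ C * D * (S p.2 + S p.1) * (min 1 (‖p.1 - p.2‖ ^ 2))
          / ‖p.1 - p.2‖ ^ ((n : ℝ) + 2 * s) := by
          apply div_le_div_of_nonneg_right _ hK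
          exact mul_le_mul_of_nonneg_left hmin (by positivity)
      _ = _ := by simp only [hh, Pi.add_apply]; ring

theorem flr_ibp (n : ℕ) (hn : 1 ≤ n) (s : ℝ) (hs : s ∈ Set.Ioo (0 : ℝ) 1)
    (f ψ : RR n → ℝ) (hf : FlrBL f) (hψ : FlrBL ψ) (hfc : Continuous f) (hψc : Continuous ψ)
    (hψs : HasCompactSupport ψ)
    (h2 : ∃ C : ℝ, 0 ≤ C ∧ ∀ x z, |2 * f x - f (x + z) - f (x - z)| ≤ C * min 1 (‖z‖ ^ 2)) :
    ∫ p : RR n × RR n,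
      (f p.1 - f p.2) * (ψ p.1 - ψ p.2) / ‖p.1 - p.2‖ ^ ((n : ℝ) + 2 * s)
    = ∫ x : RR n, (∫ y : RR n, (2 * f x - f (x + y) - f (x - y)) /
      ‖y‖ ^ ((n : ℝ) + 2 * s)) * ψ x := by
  obtain ⟨C, hC, hC'⟩ := h2
  have hI := flr_integrable n hn s hs f ψ hf hψ hfc hψc hψs
  have mp : MeasurePreserving (MeasurableEquiv.shearAddRight (RR n))
      (volume : Measure (RR n × RR n)) volume := measurePreserving_prod_add volume volume
  rw [← mp.integral_comp']
  have hI' := (mp.integrable_comp_emb (MeasurableEquiv.measurableEmbedding _)).2 hI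
  have e : ∀ p : RR n × RR n, MeasurableEquiv.shearAddRight (RR n) p = (p.1, p.1 + p.2) :=
    fun p => rfl
  simp only [Function.comp_def, e, sub_add_cancel_left, norm_neg] at hI' ⊢
  rw [Measure.volume_eq_prod] at hI' ⊢
  rw [integral_prod_symm _ hI']
  have inner : ∀ z : RR n, ∫ x : RR n, (f x - f (x + z)) * (ψ x - ψ (x + z)) /
      ‖z‖ ^ ((n : ℝ) + 2 * s) = ∫ x : RR n, (2 * f x - f (x + z) - f (x - z)) /
      ‖z‖ ^ ((n : ℝ) + 2 * s) * ψ x := by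
    intro z
    have c1 : Integrable (fun x => (f x - f (x + z)) * ψ x) :=
      Continuous.integrable_of_hasCompactSupport (by fun_prop) hψs.mul_left
    have c2 : Integrable (fun x => (f (x - z) - f x) * ψ x) :=
      Continuous.integrable_of_hasCompactSupport (by fun_prop) hψs.mul_left
    have c3 : Integrable (fun x => (f x - f (x + z)) * ψ (x + z)) := by
      have := c2.comp_add_right z
      simpa only [add_sub_cancel_right] using this
    have c4 : ∫ x, (f x - f (x + z)) * ψ (x + z) = ∫ x, (f (x - z) - f x) * ψ x := by
      rw [← integral_add_right_eq_self (fun x => (f (x - z) - f x) * ψ x) z]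
      simp only [add_sub_cancel_right]
    rw [integral_div]
    have : ∀ x, (2 * f x - f (x + z) - f (x - z)) / ‖z‖ ^ ((n : ℝ) + 2 * s) * ψ x
      = ((f x - f (x + z)) * ψ x - (f (x - z) - f x) * ψ x) / ‖z‖ ^ ((n : ℝ) + 2 * s) := by
      intro x; ring
    simp only [this]
    rw [integral_div, integral_sub c1 c2, ← c4, ← integral_sub c1 c3]
    congr 2
    ext x
    ring
  simp only [inner]
  rw [integral_integral_swap]
  · simp only [integral_mul_const]
  · have J : Integrable (fun p : RR n × RR n => (min 1 (‖p.1‖ ^ 2) / ‖p.1‖ ^ ((n : ℝ) + 2 * s))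
        * |ψ p.2|) (volume.prod volume) :=
      (flr_integrable_h n hn s hs).mul_prod
        (hψc.integrable_of_hasCompactSupport hψs).abs
    refine (J.const_mul C).mono' ?_ (Filter.Eventually.of_forall fun p => ?_)
    · apply Measurable.aestronglyMeasurable
      simp only [Function.uncurry_def]
      fun_prop
    · have hK : 0 ≤ ‖p.1‖ ^ ((n : ℝ) + 2 * s) := by positivity
      simp only [Function.uncurry_def]
      rw [Real.norm_eq_abs, abs_mul, abs_div, abs_of_nonneg hK, ← mul_assoc, ← mul_div_assoc]
      gcongr
      exact hC' _ _

theorem flr_BL_of {n : ℕ} (f : RR n → ℝ) (M : ℝ) (hM : ∀ x, |f x| ≤ M) (L : NNReal)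
    (hL : LipschitzWith L f) : FlrBL f := by
  have hM0 : 0 ≤ M := (abs_nonneg _).trans (hM 0)
  refine ⟨2 * M + L, by positivity, fun x y => ?_⟩
  have h1 : |f x - f y| ≤ L * ‖x - y‖ := by
    have := hL.dist_le_mul x y
    rwa [Real.dist_eq, dist_eq_norm] at this
  have h2 : |f x - f y| ≤ 2 * M := (abs_sub _ _).trans (by linarith [hM x, hM y])
  have hL0 : (0 : ℝ) ≤ L := L.2
  have h0 := norm_nonneg (x - y)
  rcases le_total 1 ‖x - y‖ with h | h
  · rw [min_eq_left h]; linarith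
  · rw [min_eq_right h]; nlinarith

theorem flr_BL_compact {n : ℕ} (f : RR n → ℝ) (hf : ContDiff ℝ (⊤ : ℕ∞) f)
    (hs : HasCompactSupport f) : FlrBL f := by
  obtain ⟨M, hM⟩ := hs.exists_bound_of_continuous hf.continuous
  obtain ⟨L, hL⟩ := (hf.of_le (by exact_mod_cast le_top)).lipschitzWith_of_hasCompactSupport hs one_ne_zero
  exact flr_BL_of f M hM L hL

theorem flr_BL_add {n : ℕ} {f g : RR n → ℝ} (hf : FlrBL f) (hg : FlrBL g) :
    FlrBL (fun x => f x + g x) := by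
  obtain ⟨C, hC, hC'⟩ := hf
  obtain ⟨D, hD, hD'⟩ := hg
  refine ⟨C + D, by positivity, fun x y => ?_⟩
  have : f x + g x - (f y + g y) = (f x - f y) + (g x - g y) := by ring
  rw [this, add_mul]
  exact (abs_add_le _ _).trans (add_le_add (hC' _ _) (hD' _ _))

theorem flr_BL_schwartz {n : ℕ} (u : SchwartzMap (RR n) ℝ) : FlrBL (fun x => u x) := by
  obtain ⟨M, -, hM⟩ := u.decay 0 0
  obtain ⟨L, hL0, hL⟩ := u.decay 0 1
  refine flr_BL_of _ M (fun x => ?_) ⟨L, hL0.le⟩ ?_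
  · simpa using hM x
  · apply lipschitzWith_of_nnnorm_fderiv_le u.differentiable
    intro x
    have := hL x
    rw [norm_iteratedFDeriv_one] at this
    have h2 : ‖fderiv ℝ (fun x => u x) x‖ ≤ L := by simpa using this
    exact h2

theorem flr_second {n : ℕ} (b : RR n → ℝ) (hb : ContDiff ℝ (⊤ : ℕ∞) b)
    (hs : HasCompactSupport b) :
    ∃ C : ℝ, 0 ≤ C ∧ ∀ x z, |2 * b x - b (x + z) - b (x - z)| ≤ C * min 1 (‖z‖ ^ 2) := by
  obtain ⟨M, hM⟩ := hs.exists_bound_of_continuous hb.continuous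
  have hM0 : 0 ≤ M := (norm_nonneg _).trans (hM 0)
  have hd : ContDiff ℝ 1 (fderiv ℝ b) := hb.fderiv_right (m := 1) (by
    rw [one_add_one_eq_two]; exact WithTop.coe_le_coe.2 (le_top : (2 : ℕ∞) ≤ ⊤))
  obtain ⟨L, hL⟩ := hd.lipschitzWith_of_hasCompactSupport (hs.fderiv ℝ) one_ne_zero
  have hL0 : (0 : ℝ) ≤ L := L.2
  have taylor : ∀ x z, |b (x + z) - b x - fderiv ℝ b x z| ≤ L * ‖z‖ ^ 2 := by
    intro x z
    have := (convex_closedBall x ‖z‖).norm_image_sub_le_of_norm_fderiv_le' (𝕜 := ℝ) (f := b)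
      (C := L * ‖z‖) (φ := fderiv ℝ b x) (x := x) (y := x + z)
      (fun y _ => (hb.differentiable (by simp)) y)
      (fun y hy => by
        have h1 := hL.dist_le_mul y x
        rw [dist_eq_norm] at h1
        exact h1.trans (mul_le_mul_of_nonneg_left (Metric.mem_closedBall.1 hy) hL0))
      (by simp) (by simp)
    simpa [pow_two, mul_assoc] using this
  refine ⟨4 * M + 2 * L, by positivity, fun x z => ?_⟩
  have h1 : |2 * b x - b (x + z) - b (x - z)| ≤ 4 * M := by
    have a1 := abs_le.1 (hM x)
    have a2 := abs_le.1 (hM (x + z))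
    have a3 := abs_le.1 (hM (x - z))
    rw [abs_le]; constructor <;> linarith
  have h2 : |2 * b x - b (x + z) - b (x - z)| ≤ 2 * L * ‖z‖ ^ 2 := by
    have a1 := abs_le.1 (taylor x z)
    have a2 := abs_le.1 (taylor x (-z))
    rw [norm_neg, map_neg, ← sub_eq_add_neg] at a2
    rw [abs_le]; constructor <;> linarith
  have h0 := sq_nonneg ‖z‖
  rcases le_total 1 (‖z‖ ^ 2) with h | h
  · rw [min_eq_left h]; linarith
  · rw [min_eq_right h]; nlinarith

theorem flr_identity
    (n : ℕ) (hn : 1 ≤ n) (s : ℝ) (hs : s ∈ Set.Ioo (0 : ℝ) 1)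
    (γ : RR n → ℝ) (hγpos : ∀ x, 0 < γ x)
    (hac : ContDiff ℝ (⊤ : ℕ∞) (fun x => Real.sqrt (γ x)))
    (hsupp : HasCompactSupport (fun x => Real.sqrt (γ x) - 1))
    (u : SchwartzMap (RR n) ℝ) (φ : RR n → ℝ) (hφ : ContDiff ℝ (⊤ : ℕ∞) φ)
    (hφs : HasCompactSupport φ) :
    Bform n s γ (fun z => u z) φ =
      Bform n s (fun _ => 1) (fun x => Real.sqrt (γ x) * u x) (fun x => Real.sqrt (γ x) * φ x)
        + ∫ x : RR n, liouvillePot n s γ x * (Real.sqrt (γ x) * u x)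
            * (Real.sqrt (γ x) * φ x) := by
  set a : RR n → ℝ := fun x => Real.sqrt (γ x) with ha
  have hapos : ∀ x, 0 < a x := fun x => Real.sqrt_pos.2 (hγpos x)
  have hbc : ContDiff ℝ (⊤ : ℕ∞) (fun x => a x - 1) := hac.sub contDiff_const
  have hu : ContDiff ℝ (⊤ : ℕ∞) (fun x => u x) := u.smooth ⊤
  have hbBL := flr_BL_compact _ hbc hsupp
  have haBL : FlrBL a := by
    obtain ⟨C, hC, hC'⟩ := hbBL
    exact ⟨C, hC, fun x y => by simpa using hC' x y⟩
  have hauBL : FlrBL (fun x => a x * u x) := by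
    have h1 : FlrBL (fun x => (a x - 1) * u x) :=
      flr_BL_compact _ (hbc.mul hu) hsupp.mul_right
    have h2 := flr_BL_add h1 (flr_BL_schwartz u)
    have e : (fun x => a x * u x) = fun x => (a x - 1) * u x + u x := by ext x; ring
    rwa [e]
  have hsec : ∃ C : ℝ, 0 ≤ C ∧
      ∀ x z, |2 * a x - a (x + z) - a (x - z)| ≤ C * min 1 (‖z‖ ^ 2) := by
    obtain ⟨C, hC, hC'⟩ := flr_second _ hbc hsupp
    refine ⟨C, hC, fun x z => ?_⟩
    have := hC' x z
    have e : 2 * (a x - 1) - (a (x + z) - 1) - (a (x - z) - 1)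
      = 2 * a x - a (x + z) - a (x - z) := by ring
    rwa [e] at this
  have hθ : ContDiff ℝ (⊤ : ℕ∞) (fun x => a x * φ x) := hac.mul hφ
  have hθs : HasCompactSupport (fun x => a x * φ x) := hφs.mul_left
  have hψ : ContDiff ℝ (⊤ : ℕ∞) (fun x => a x * u x * (a x * φ x)) := (hac.mul hu).mul hθ
  have hψs : HasCompactSupport (fun x => a x * u x * (a x * φ x)) := hθs.mul_left
  -- the function paired with `a`
  have hψ' : ContDiff ℝ (⊤ : ℕ∞) (fun x => a x * u x * φ x) := (hac.mul hu).mul hφ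
  have hψs' : HasCompactSupport (fun x => a x * u x * φ x) := hφs.mul_left
  have I1 := flr_integrable n hn s hs _ _ hauBL (flr_BL_compact _ hθ hθs)
    (hac.mul hu).continuous hθ.continuous hθs
  have I2 := flr_integrable n hn s hs _ _ haBL (flr_BL_compact _ hψ' hψs')
    hac.continuous hψ'.continuous hψs'
  have E := flr_ibp n hn s hs _ _ haBL (flr_BL_compact _ hψ' hψs')
    hac.continuous hψ'.continuous hψs' hsec
  have Q : ∀ x, liouvillePot n s γ x * (Real.sqrt (γ x) * u x) * (Real.sqrt (γ x) * φ x) =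
      -(cns n s / 2) * ((∫ y : RR n, (2 * a x - a (x + y) - a (x - y)) /
      ‖y‖ ^ ((n : ℝ) + 2 * s)) * (a x * u x * φ x)) := by
    intro x
    have h0 : a x ≠ 0 := (hapos x).ne'
    change (-(a x)⁻¹ * ((cns n s / 2) * ∫ y : RR n, (2 * a x - a (x + y) - a (x - y)) /
      ‖y‖ ^ ((n : ℝ) + 2 * s))) * (a x * u x) * (a x * φ x) = _
    field_simp
  simp only [Q]
  rw [integral_const_mul, ← E]
  unfold Bform
  simp only [Real.sqrt_one, one_mul]
  rw [neg_mul, ← sub_eq_add_neg, ← mul_sub, ← integral_sub I1 I2]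
  congr 2
  ext p
  change a p.1 * a p.2 * _ * _ / _ = _
  ring

theorem fractional_liouville_reduction_equation
    (n : ℕ) (hn : 1 ≤ n) (s : ℝ) (hs : s ∈ Set.Ioo (0 : ℝ) 1)
    (Ω : Set (RR n)) (hΩ : IsOpen Ω)
    (γ : RR n → ℝ) (hγ : ContDiff ℝ (⊤ : ℕ∞) γ)
    (γ₀ : ℝ) (hγ₀ : 0 < γ₀) (hlb : ∀ x, γ₀ ≤ γ x)
    (hsupp : HasCompactSupport (fun x => γ x - 1))
    (u : SchwartzMap (RR n) ℝ) :
    (∀ φ : RR n → ℝ, ContDiff ℝ (⊤ : ℕ∞) φ → HasCompactSupport φ → tsupport φ ⊆ Ω →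
        Bform n s γ (fun z => u z) φ = 0)
      ↔ (∀ φ : RR n → ℝ, ContDiff ℝ (⊤ : ℕ∞) φ → HasCompactSupport φ → tsupport φ ⊆ Ω →
        Bform n s (fun _ => 1) (fun x => Real.sqrt (γ x) * u x) φ
          + ∫ x : RR n, liouvillePot n s γ x * (Real.sqrt (γ x) * u x) * φ x = 0) := by
  have hpos : ∀ x, 0 < γ x := fun x => hγ₀.trans_le (hlb x)
  have hac : ContDiff ℝ (⊤ : ℕ∞) (fun x => Real.sqrt (γ x)) := hγ.sqrt fun x => (hpos x).ne'
  have hsupp' : HasCompactSupport (fun x => Real.sqrt (γ x) - 1) := by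
    refine hsupp.mono fun x hx => ?_
    simp only [Function.mem_support] at hx ⊢
    intro h
    apply hx
    rw [show γ x = 1 by linarith]
    simp
  have hs0 : ∀ x, Real.sqrt (γ x) ≠ 0 := fun x => (Real.sqrt_pos.2 (hpos x)).ne'
  have key := flr_identity n hn s hs γ hpos hac hsupp' u
  constructor
  · intro H φ hφ hφs hφΩ
    have hθs : HasCompactSupport (fun x => (Real.sqrt (γ x))⁻¹ * φ x) := hφs.mul_left
    have hθ : ContDiff ℝ (⊤ : ℕ∞) (fun x => (Real.sqrt (γ x))⁻¹ * φ x) := (hac.inv hs0).mul hφ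
    have h1 := H _ hθ hθs ((tsupport_mul_subset_right).trans hφΩ)
    rw [key _ hθ hθs] at h1
    simpa only [mul_inv_cancel_left₀ (hs0 _)] using h1
  · intro H φ hφ hφs hφΩ
    rw [key _ hφ hφs]
    exact H _ (hac.mul hφ) hφs.mul_left ((tsupport_mul_subset_right).trans hφΩ)
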